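/- arXiv:1609.06253 — 2 statements merged into one kernel-verified Lean document; each statement's English description precedes it below -/
import Mathlib

section
/- Let G be a group that is autostackable over a finite inverse-closed generating set A respecting a finitely generated subgroup H, and let A′ ⊇ A be another finite inverse-closed generating set for G (with map to G and involution extending those of A). Then G is also autostackable over A′ respecting H. -/
/-!
Keep the old normal forms, read as words over the larger alphabet, and keep the old stacking
function on the old letters. For each new letter `a` fix one word `w a` over the old alphabet with
the same value (its old normal form) and put `φ(y, a) = w a` for every normal form `y`.

* Since the normal forms and the values of the stacking function contain old letters only, an
  infinite chain as in (F3) involves only old letters from its second term on, so its tail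
  contradicts (F3) for the old structure. Condition (F2) is void for new letters, because the
  inverse of a new letter is new.
* The subgroup conditions hold with the same `B`, `N_H`, `N_Tr`: a new letter lies outside `B`, and
  the stacking function does not depend on the normal form there, so it is translation invariant.
* The new graph is the letterwise image of the old graph together with the finitely many sets
  `{(y, [a], w a) : y ∈ N}`. The former is regular by `IsRegularLang.image_map`. The latter are
  handled by `isRegularLang_pad_const`: padding a variable word of a regular language with two fixed
  words only alters finitely many initial letters.
-/

/-- Evaluation of a word over an alphabet `α` in a monoid `G` via a letter map `π`. -/
def wordVal {G : Type} [Monoid G] {α : Type} (π : α → G) (w : List α) : G :=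
  (w.map π).prod

/-- A language is prefix-closed if it contains every prefix of each of its words. -/
def PrefixClosed {α : Type} (N : Set (List α)) : Prop :=
  ∀ w ∈ N, ∀ p : List α, p <+: w → p ∈ N

/-- `(α, π, inv)` is a finite inverse-closed generating set for the group `G`:
no letter represents the identity, `inv` is an involution with `π (inv a) = (π a)⁻¹`,
and the letters generate `G`. -/
structure IsInvGenSet (G : Type) [Group G] {α : Type} (π : α → G) (inv : α → α) : Prop where
  ne_one : ∀ a, π a ≠ 1
  inv_invol : ∀ a, inv (inv a) = a
  val_inv : ∀ a, π (inv a) = (π a)⁻¹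
  gen : Subgroup.closure (Set.range π) = ⊤

/-- A language over `α` is regular if it is accepted by a finite state automaton. -/
def IsRegularLang {α : Type} (L : Set (List α)) : Prop :=
  ∃ (σ : Type) (_ : Fintype σ) (M : DFA α σ), M.accepts = L

/-- The padded word over `(α ∪ {$})²` corresponding to a pair of words;
`none` plays the role of the padding symbol `$`. -/
def padWord2 {α : Type} (p : List α × List α) : List (Option α × Option α) :=
  (List.range (max p.1.length p.2.length)).map (fun i => (p.1[i]?, p.2[i]?))

/-- Synchronous regularity of a set of pairs of words. -/
def SyncRegular2 {α : Type} (L : Set (List α × List α)) : Prop :=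
  IsRegularLang (padWord2 '' L)

/-- The padded word over `(α ∪ {$})³` corresponding to a triple of words. -/
def padWord3 {α : Type} (p : List α × List α × List α) :
    List (Option α × Option α × Option α) :=
  (List.range (max p.1.length (max p.2.1.length p.2.2.length))).map
    (fun i => (p.1[i]?, p.2.1[i]?, p.2.2[i]?))

/-- Synchronous regularity of a set of triples of words. -/
def SyncRegular3 {α : Type} (L : Set (List α × List α × List α)) : Prop :=
  IsRegularLang (padWord3 '' L)

structure StackingData (α : Type) where
  N : Set (List α)
  K : ℕ
  phi : List α → α → List α

/-- `st` is a stackable structure for `G` over the finite inverse-closed generating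
set `(α, π, inv)`. -/
structure IsStacking (G : Type) [Group G] {α : Type} (π : α → G) (inv : α → α)
    (st : StackingData α) : Prop where
  gen : IsInvGenSet G π inv
  nf : ∀ g : G, ∃! w, w ∈ st.N ∧ wordVal π w = g
  prefixClosed : PrefixClosed st.N
  F1 : ∀ y ∈ st.N, ∀ a : α, wordVal π (st.phi y a) = π a ∧ (st.phi y a).length ≤ st.K
  F2 : ∀ y ∈ st.N, ∀ a : α, (y ++ [a] ∈ st.N ∨ ∃ y', y = y' ++ [inv a]) → st.phi y a = [a]
  F3 : ¬ ∃ seq : ℕ → List α × α,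
      ∀ i : ℕ, (seq i).1 ∈ st.N ∧ (seq i).1 ++ [(seq i).2] ∉ st.N ∧
        (¬ ∃ y', (seq i).1 = y' ++ [inv (seq i).2]) ∧
        ∃ u u' : List α, st.phi (seq i).1 (seq i).2 = u ++ (seq (i+1)).2 :: u' ∧
          (seq (i+1)).1 ∈ st.N ∧
          wordVal π ((seq (i+1)).1) = wordVal π ((seq i).1 ++ u)

/-- The regularity conditions making a stackable structure autostackable:
the set of normal forms is regular and the graph of the stacking function is
synchronously regular. -/
def StackingData.IsAuto {α : Type} (st : StackingData α) : Prop :=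
  IsRegularLang st.N ∧
  SyncRegular3 {t : List α × List α × List α | ∃ y ∈ st.N, ∃ a : α, t = (y, [a], st.phi y a)}

/-- The stacking structure `st` respects the subgroup `H`. -/
def RespectsSubgroup {G : Type} [Group G] {α : Type} (π : α → G) (inv : α → α)
    (st : StackingData α) (H : Subgroup G) : Prop :=
  ∃ B : Set α,
    (∀ b ∈ B, inv b ∈ B) ∧
    (∀ b ∈ B, π b ∈ H) ∧
    Subgroup.closure (π '' B) = H ∧
    ∃ NH NTr : Set (List α),
      (∀ w ∈ NH, ∀ b ∈ w, b ∈ B) ∧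
      PrefixClosed NH ∧
      (∀ h : G, h ∈ H → ∃! w, w ∈ NH ∧ wordVal π w = h) ∧
      PrefixClosed NTr ∧
      (∀ g : G, ∃! w, w ∈ NTr ∧ wordVal π w * g⁻¹ ∈ H) ∧
      st.N = {w | ∃ u ∈ NH, ∃ v ∈ NTr, w = u ++ v} ∧
      (∀ y ∈ st.N, wordVal π y ∈ H → ∀ b ∈ B, ∀ c ∈ st.phi y b, c ∈ B) ∧
      (∀ a : α, ∀ y ∈ st.N, ∀ y' ∈ st.N,
        ¬(wordVal π y ∈ H ∧ a ∈ B) →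
        (∃ h ∈ H, wordVal π y' = h * wordVal π y) → st.phi y' a = st.phi y a)

/-- A group is autostackable if it admits an autostackable structure over some
finite inverse-closed generating set. -/
def Autostackable (G : Type) [Group G] : Prop :=
  ∃ (α : Type) (_ : Fintype α) (π : α → G) (inv : α → α) (st : StackingData α),
    IsStacking G π inv st ∧ st.IsAuto

/-- A group is stackable if it admits a stackable structure over some
finite inverse-closed generating set. -/
def Stackable (G : Type) [Group G] : Prop :=
  ∃ (α : Type) (_ : Fintype α) (π : α → G) (inv : α → α) (st : StackingData α),
    IsStacking G π inv st

/-- `G` is autostackable respecting the subgroup `H`. -/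
def AutostackableRespecting (G : Type) [Group G] (H : Subgroup G) : Prop :=
  ∃ (α : Type) (_ : Fintype α) (π : α → G) (inv : α → α) (st : StackingData α),
    IsStacking G π inv st ∧ st.IsAuto ∧ RespectsSubgroup π inv st H

/-- `G` is stackable respecting the subgroup `H`. -/
def StackableRespecting (G : Type) [Group G] (H : Subgroup G) : Prop :=
  ∃ (α : Type) (_ : Fintype α) (π : α → G) (inv : α → α) (st : StackingData α),
    IsStacking G π inv st ∧ RespectsSubgroup π inv st H

/-- `G` is autostackable over the fixed generating set `(α, π, inv)` respecting the
subgroup `H`. -/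
def AutostackableOverRespecting {G : Type} [Group G] {α : Type} (π : α → G)
    (inv : α → α) (H : Subgroup G) : Prop :=
  ∃ st : StackingData α, IsStacking G π inv st ∧ st.IsAuto ∧ RespectsSubgroup π inv st H

/-! ### Closure properties of regular languages -/

lemma IsRegularLang.of_nfa {α σ : Type} [Fintype σ] (M : NFA α σ) {L : Set (List α)}
    (h : ∀ w, w ∈ M.accepts ↔ w ∈ L) : IsRegularLang L := by
  classical
  refine ⟨Set σ, inferInstance, M.toDFA, ?_⟩
  rw [NFA.toDFA_correct]
  exact Set.ext h

/-- The image of a regular language under a letter-to-letter map, not necessarily injective, is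
regular: let an automaton guess a preimage of each letter. -/
lemma IsRegularLang.image_map {α β : Type} (f : α → β) {L : Set (List α)}
    (hL : IsRegularLang L) : IsRegularLang (List.map f '' L) := by
  obtain ⟨σ, _, M, rfl⟩ := hL
  let M' : NFA β σ :=
    { step := fun s b => {t | ∃ a, f a = b ∧ t = M.step s a}
      start := {M.start}
      accept := M.accept }
  have key : ∀ (w : List β) (s t : σ),
      t ∈ M'.evalFrom {s} w ↔ ∃ v, v.map f = w ∧ t = M.evalFrom s v := by
    intro w
    induction w with
    | nil => intro s t; simp
    | cons b w ih =>
      intro s t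
      rw [NFA.evalFrom_cons, NFA.stepSet_singleton, NFA.mem_evalFrom_iff_exists]
      constructor
      · rintro ⟨_, ⟨a, rfl, rfl⟩, h⟩
        obtain ⟨v, rfl, rfl⟩ := (ih _ _).1 h
        exact ⟨a :: v, rfl, rfl⟩
      · rintro ⟨v, hv, rfl⟩
        obtain ⟨a, v', rfl, rfl, rfl⟩ := List.map_eq_cons_iff.1 hv
        exact ⟨_, ⟨a, rfl, rfl⟩, (ih _ _).2 ⟨v', rfl, rfl⟩⟩
  refine .of_nfa M' fun w => ?_
  rw [NFA.mem_accepts]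
  constructor
  · rintro ⟨t, ht, h⟩
    obtain ⟨v, rfl, rfl⟩ := (key _ _ _).1 h
    exact ⟨v, ht, rfl⟩
  · rintro ⟨v, hv, rfl⟩
    exact ⟨_, hv, (key _ _ _).2 ⟨v, rfl, rfl⟩⟩

lemma IsRegularLang.image_cons {α : Type} (c : α) {L : Set (List α)}
    (hL : IsRegularLang L) : IsRegularLang (List.cons c '' L) := by
  obtain ⟨σ, _, M, rfl⟩ := hL
  let M' : NFA α (Option σ) :=
    { step := fun s b => match s with
        | none => {t | b = c ∧ t = some M.start}
        | some s => {some (M.step s b)}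
      start := {none}
      accept := some '' M.accept }
  have key : ∀ (w : List α) (s : σ), M'.evalFrom {some s} w = {some (M.evalFrom s w)} := by
    intro w
    induction w with
    | nil => intro s; simp
    | cons b w ih =>
      intro s
      rw [NFA.evalFrom_cons, NFA.stepSet_singleton]
      exact ih _
  refine .of_nfa M' fun w => ?_
  rw [NFA.mem_accepts]
  cases w with
  | nil =>
    have : [] ∉ List.cons c '' (M.accepts : Set (List α)) := by rintro ⟨_, _, h⟩; cases h
    simpa [M'] using this
  | cons b w =>
    simp only [NFA.evalFrom_cons]
    rw [show M'.start = {none} from rfl, NFA.stepSet_singleton]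
    constructor
    · rintro ⟨t, ⟨s, hs, rfl⟩, h⟩
      obtain ⟨_, ⟨rfl, rfl⟩, h⟩ := NFA.mem_evalFrom_iff_exists.1 h
      rw [key] at h
      obtain rfl := Option.some.inj h
      exact ⟨w, hs, rfl⟩
    · rintro ⟨v, hv, h⟩
      obtain ⟨rfl, rfl⟩ := List.cons.inj h
      refine ⟨_, ⟨_, hv, rfl⟩, NFA.mem_evalFrom_iff_exists.2 ⟨some M.start, ⟨rfl, rfl⟩, ?_⟩⟩
      rw [key]; rfl

lemma IsRegularLang.preimage_cons {α : Type} (c : α) {L : Set (List α)}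
    (hL : IsRegularLang L) : IsRegularLang (List.cons c ⁻¹' L) := by
  obtain ⟨σ, i, M, rfl⟩ := hL
  exact ⟨σ, i, ⟨M.step, M.step M.start c, M.accept⟩, rfl⟩

lemma IsRegularLang.empty {α : Type} : IsRegularLang (∅ : Set (List α)) :=
  ⟨Unit, inferInstance, ⟨fun _ _ => (), (), ∅⟩, rfl⟩

lemma IsRegularLang.union {α : Type} {L₁ L₂ : Set (List α)}
    (h₁ : IsRegularLang L₁) (h₂ : IsRegularLang L₂) : IsRegularLang (L₁ ∪ L₂) :=
  Language.IsRegular.add (L1 := L₁) (L2 := L₂) h₁ h₂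

lemma IsRegularLang.iUnion {α ι : Type} [Finite ι] {L : ι → Set (List α)}
    (h : ∀ i, IsRegularLang (L i)) : IsRegularLang (⋃ i, L i) := by
  classical
  have := Fintype.ofFinite ι
  have key : ∀ s : Finset ι, IsRegularLang (⋃ i ∈ s, L i) := by
    intro s
    induction s using Finset.induction_on with
    | empty => simpa using IsRegularLang.empty
    | insert a s _ ih =>
      rw [Finset.set_biUnion_insert]
      exact (h a).union ih
  simpa using key Finset.univ

lemma IsRegularLang.singleton {α : Type} (w : List α) : IsRegularLang {w} := by
  induction w with
  | nil =>
    refine ⟨Bool, inferInstance, ⟨fun _ _ => false, true, {true}⟩, Set.ext fun w => ?_⟩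
    have hf : ∀ w : List α, List.foldl (fun _ _ => false) false w = false := by
      intro w; induction w with
      | nil => rfl
      | cons b w ih => exact ih
    cases w with
    | nil => exact ⟨fun _ => rfl, fun _ => rfl⟩
    | cons b w =>
      constructor
      · intro h
        exact absurd ((hf w).symm.trans h) (by simp)
      · intro h; cases h
  | cons a w ih => simpa using ih.image_cons a

/-! ### Padded triples -/

lemma padWord3_cons {α : Type} (c : α) (y u v : List α) :
    padWord3 (c :: y, u, v) = (some c, u[0]?, v[0]?) :: padWord3 (y, u.tail, v.tail) := by
  have h : max (c :: y).length (max u.length v.length)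
      = max y.length (max u.tail.length v.tail.length) + 1 := by
    simp only [List.length_cons, List.length_tail]; omega
  unfold padWord3
  simp only [h, List.range_succ_eq_map]
  simp [Function.comp_def]

lemma padWord3_nil_nil {α : Type} (y : List α) :
    padWord3 (y, [], []) = y.map (fun c => (some c, none, none)) := by
  induction y with
  | nil => rfl
  | cons c y ih => rw [padWord3_cons]; simp [ih]

lemma padWord3_map {α β : Type} (f : α → β) (y u v : List α) :
    padWord3 (y.map f, u.map f, v.map f)
      = (padWord3 (y, u, v)).map
          (Prod.map (Option.map f) (Prod.map (Option.map f) (Option.map f))) := by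
  simp [padWord3, Function.comp_def]

/-- Padding the words of a regular language with two fixed words `u`, `v` gives a regular
language. The induction peels off first letters: the nonempty words `c :: y` of `N` contribute one
letter followed by the corresponding language for `c⁻¹N` and the tails of `u` and `v`. -/
lemma isRegularLang_pad_const {α : Type} [Finite α] (n : ℕ) :
    ∀ (N : Set (List α)) (u v : List α), IsRegularLang N → u.length ≤ n → v.length ≤ n →
      IsRegularLang ((fun y => padWord3 (y, u, v)) '' N) := by
  classical
  induction n with
  | zero =>
    intro N u v hN hu hv
    obtain rfl := List.length_eq_zero_iff.1 (Nat.le_zero.1 hu)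
    obtain rfl := List.length_eq_zero_iff.1 (Nat.le_zero.1 hv)
    simp only [padWord3_nil_nil]
    exact hN.image_map _
  | succ n ih =>
    intro N u v hN hu hv
    have hE : IsRegularLang (if [] ∈ N then {padWord3 ([], u, v)} else ∅) := by
      split_ifs
      · exact .singleton _
      · exact .empty
    have hC : ∀ c : α, IsRegularLang (List.cons (some c, u[0]?, v[0]?) ''
        ((fun y => padWord3 (y, u.tail, v.tail)) '' (List.cons c ⁻¹' N))) := fun c =>
      (ih _ _ _ (hN.preimage_cons c) (by rw [List.length_tail]; omega)
        (by rw [List.length_tail]; omega)).image_cons _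
    convert hE.union (IsRegularLang.iUnion hC) using 1
    ext x
    simp only [Set.mem_union, Set.mem_iUnion, Set.mem_image, Set.mem_preimage]
    constructor
    · rintro ⟨y, hy, rfl⟩
      cases y with
      | nil => left; simp [hy]
      | cons c y => exact .inr ⟨c, _, ⟨y, hy, rfl⟩, (padWord3_cons ..).symm⟩
    · rintro (h | ⟨c, _, ⟨y, hy, rfl⟩, rfl⟩)
      · split_ifs at h with h0
        · exact ⟨[], h0, h.symm⟩
        · exact h.elim
      · exact ⟨c :: y, hy, padWord3_cons ..⟩

/-! ### The extended stacking structure -/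

section Extend

variable {α' : Type} {S : Finset α'}

/-- A word over the subalphabet `S`, read as a word over the whole alphabet. -/
abbrev upWord (w : List {a : α' // a ∈ S}) : List α' := w.map Subtype.val

lemma upWord_injective : Function.Injective (upWord (S := S)) :=
  List.map_injective_iff.2 Subtype.val_injective

lemma wordVal_upWord {G : Type} [Group G] (π' : α' → G) (w : List {a : α' // a ∈ S}) :
    wordVal π' (upWord w) = wordVal (fun a : {a : α' // a ∈ S} => π' a.1) w := by
  simp [wordVal, upWord]

lemma PrefixClosed.image_upWord {N : Set (List {a : α' // a ∈ S})} (hN : PrefixClosed N) :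
    PrefixClosed (upWord '' N) := by
  rintro _ ⟨w, hw, rfl⟩ p hp
  obtain ⟨q, hq, rfl⟩ := List.prefix_map_iff.1 hp
  exact ⟨q, hN w hw q hq, rfl⟩

lemma upWord_snoc_mem_iff {N : Set (List {a : α' // a ∈ S})} {y : List {a : α' // a ∈ S}}
    {a : {a : α' // a ∈ S}} : upWord y ++ [a.1] ∈ upWord '' N ↔ y ++ [a] ∈ N := by
  rw [show upWord y ++ [a.1] = upWord (y ++ [a]) by simp]
  exact upWord_injective.mem_set_image

lemma upWord_eq_snoc_iff {y : List {a : α' // a ∈ S}} {a : {a : α' // a ∈ S}} :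
    (∃ y', upWord y = y' ++ [a.1]) ↔ ∃ y', y = y' ++ [a] := by
  constructor
  · rintro ⟨y', h⟩
    obtain ⟨l, m, rfl, rfl, hm⟩ := List.map_eq_append_iff.1 h
    obtain ⟨b, rfl, hb⟩ := List.map_eq_singleton_iff.1 hm
    exact ⟨l, by rw [Subtype.ext hb]⟩
  · rintro ⟨y', rfl⟩
    exact ⟨upWord y', by simp⟩

open Classical in
/-- The stacking structure over the larger alphabet: the normal forms are unchanged, old letters
are stacked as before, and a new letter `a` is always replaced by the old word `w a`.
`Function.invFun upWord` recovers the word over `S` from a word over the larger alphabet; on words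
that are not over `S` its value is irrelevant. -/
noncomputable def extendStacking [Fintype α'] (st : StackingData {a : α' // a ∈ S})
    (w : α' → List {a : α' // a ∈ S}) : StackingData α' where
  N := upWord '' st.N
  K := max st.K (Finset.univ.sup fun a => (w a).length)
  phi y a := upWord (if h : a ∈ S then st.phi (Function.invFun upWord y) ⟨a, h⟩ else w a)

variable [Fintype α'] (st : StackingData {a : α' // a ∈ S}) (w : α' → List {a : α' // a ∈ S})

lemma extendStacking_phi_old (y : List {a : α' // a ∈ S}) (a : {a : α' // a ∈ S}) :
    (extendStacking st w).phi (upWord y) a.1 = upWord (st.phi y a) := by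
  simp only [extendStacking, a.2, dif_pos, Function.leftInverse_invFun upWord_injective y]

lemma extendStacking_phi_new (y : List α') {a : α'} (ha : a ∉ S) :
    (extendStacking st w).phi y a = upWord (w a) := by
  simp only [extendStacking, ha, dif_neg, not_false_eq_true]

lemma mem_of_mem_extendStacking_phi {y : List α'} {a c : α'}
    (hc : c ∈ (extendStacking st w).phi y a) : c ∈ S := by
  obtain ⟨b, -, rfl⟩ := List.mem_map.1 hc
  exact b.2

/-- Condition (F3): after its first term a chain for the extended structure only uses letters of
`S`, so dropping the first term leaves a chain for the original structure. -/
lemma extendStacking_F3 {G : Type} [Group G] {π' : α' → G} {inv' : α' → α'}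
    (hSinv : ∀ a ∈ S, inv' a ∈ S)
    (hst : IsStacking G (fun a : {a : α' // a ∈ S} => π' a.1)
      (fun a => ⟨inv' a.1, hSinv a.1 a.2⟩) st) :
    ¬ ∃ seq : ℕ → List α' × α',
      ∀ i : ℕ, (seq i).1 ∈ (extendStacking st w).N ∧
        (seq i).1 ++ [(seq i).2] ∉ (extendStacking st w).N ∧
        (¬ ∃ y', (seq i).1 = y' ++ [inv' (seq i).2]) ∧
        ∃ u u' : List α',
          (extendStacking st w).phi (seq i).1 (seq i).2 = u ++ (seq (i+1)).2 :: u' ∧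
          (seq (i+1)).1 ∈ (extendStacking st w).N ∧
          wordVal π' ((seq (i+1)).1) = wordVal π' ((seq i).1 ++ u) := by
  rintro ⟨seq, hseq⟩
  have hS : ∀ i, (seq (i + 1)).2 ∈ S := fun i => by
    obtain ⟨-, -, -, u, u', h, -⟩ := hseq i
    exact mem_of_mem_extendStacking_phi st w (by rw [h]; simp)
  choose y hyN hy using fun i => (hseq (i + 1)).1
  refine hst.F3 ⟨fun i => (y i, ⟨(seq (i + 1)).2, hS i⟩), fun i => ?_⟩
  obtain ⟨-, h1, h2, u, u', h3, -, h4⟩ := hseq (i + 1)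
  rw [← hy i] at h1 h2 h3 h4
  rw [← hy (i + 1)] at h4
  refine ⟨hyN i, fun h => h1 ?_, fun h => h2 ?_, ?_⟩
  · exact upWord_snoc_mem_iff (a := ⟨(seq (i + 1)).2, hS i⟩).2 h
  · exact upWord_eq_snoc_iff (a := ⟨inv' (seq (i + 1)).2, hSinv _ (hS i)⟩).2 h
  · rw [extendStacking_phi_old st w (y i) ⟨(seq (i + 1)).2, hS i⟩] at h3
    obtain ⟨l, m, hlm, rfl, hm⟩ := List.map_eq_append_iff.1 h3
    obtain ⟨b, m', rfl, hb, rfl⟩ := List.map_eq_cons_iff.1 hm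
    refine ⟨l, m', ?_, hyN (i + 1), ?_⟩
    · change st.phi (y i) ⟨(seq (i + 1)).2, hS i⟩ = _
      rw [hlm]
      congr 2
      exact Subtype.ext hb
    · rw [← wordVal_upWord, ← wordVal_upWord, h4]
      simp

lemma isStacking_extendStacking {G : Type} [Group G] {π' : α' → G} {inv' : α' → α'}
    (hSinv : ∀ a ∈ S, inv' a ∈ S) (hgen' : IsInvGenSet G π' inv')
    (hst : IsStacking G (fun a : {a : α' // a ∈ S} => π' a.1)
      (fun a => ⟨inv' a.1, hSinv a.1 a.2⟩) st)
    (hw : ∀ a, wordVal (fun a : {a : α' // a ∈ S} => π' a.1) (w a) = π' a) :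
    IsStacking G π' inv' (extendStacking st w) where
  gen := hgen'
  nf g := by
    obtain ⟨y, ⟨hy, rfl⟩, huniq⟩ := hst.nf g
    refine ⟨upWord y, ⟨⟨y, hy, rfl⟩, wordVal_upWord ..⟩, ?_⟩
    rintro _ ⟨⟨z, hz, rfl⟩, h⟩
    rw [wordVal_upWord] at h
    rw [huniq z ⟨hz, h⟩]
  prefixClosed := hst.prefixClosed.image_upWord
  F1 := by
    rintro _ ⟨y, hy, rfl⟩ a
    by_cases ha : a ∈ S
    · lift a to {a : α' // a ∈ S} using ha
      rw [extendStacking_phi_old, wordVal_upWord, List.length_map]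
      exact ⟨(hst.F1 y hy a).1, le_max_of_le_left (hst.F1 y hy a).2⟩
    · rw [extendStacking_phi_new _ _ _ ha, wordVal_upWord, List.length_map]
      exact ⟨hw a, le_max_of_le_right
        (Finset.le_sup (f := fun a => (w a).length) (Finset.mem_univ a))⟩
  F2 := by
    rintro _ ⟨y, hy, rfl⟩ a h
    have ha : a ∈ S := by
      rcases h with ⟨z, -, hz⟩ | ⟨y', hy'⟩
      · have : a ∈ upWord z := by rw [hz]; simp
        obtain ⟨b, -, rfl⟩ := List.mem_map.1 this
        exact b.2
      · have : inv' a ∈ upWord y := by rw [hy']; simp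
        obtain ⟨b, -, hb⟩ := List.mem_map.1 this
        rw [← hgen'.inv_invol a, ← hb]
        exact hSinv _ b.2
    lift a to {a : α' // a ∈ S} using ha
    rw [extendStacking_phi_old, hst.F2 y hy a]
    · rfl
    · exact h.imp upWord_snoc_mem_iff.1
        (upWord_eq_snoc_iff (a := ⟨inv' a.1, hSinv a.1 a.2⟩)).1
  F3 := extendStacking_F3 st w hSinv hst

lemma isAuto_extendStacking (hst : st.IsAuto) : (extendStacking st w).IsAuto := by
  have hN : IsRegularLang (extendStacking st w).N := hst.1.image_map _
  refine ⟨hN, ?_⟩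
  have hnew : ∀ a : {a : α' // a ∉ S}, IsRegularLang
      ((fun y => padWord3 (y, [a.1], upWord (w a.1))) '' (extendStacking st w).N) := fun a =>
    isRegularLang_pad_const (max 1 (upWord (w a.1)).length) _ _ _ hN
      (le_max_left _ _) (le_max_right _ _)
  have h := (hst.2.image_map (Prod.map (Option.map (Subtype.val : {a : α' // a ∈ S} → α'))
    (Prod.map (Option.map Subtype.val) (Option.map Subtype.val)))).union (.iUnion hnew)
  unfold SyncRegular3
  convert h using 1
  ext x
  simp only [Set.mem_union, Set.mem_iUnion, Set.mem_image]
  constructor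
  · rintro ⟨_, ⟨_, ⟨y, hy, rfl⟩, a, rfl⟩, rfl⟩
    by_cases ha : a ∈ S
    · lift a to {a : α' // a ∈ S} using ha
      refine .inl ⟨_, ⟨_, ⟨y, hy, a, rfl⟩, rfl⟩, ?_⟩
      rw [extendStacking_phi_old, ← padWord3_map]
      rfl
    · refine .inr ⟨⟨a, ha⟩, _, ⟨y, hy, rfl⟩, ?_⟩
      rw [extendStacking_phi_new _ _ _ ha]
  · rintro (⟨_, ⟨_, ⟨y, hy, a, rfl⟩, rfl⟩, rfl⟩ | ⟨⟨a, ha⟩, y, hy, rfl⟩)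
    · refine ⟨_, ⟨_, ⟨y, hy, rfl⟩, a.1, rfl⟩, ?_⟩
      rw [extendStacking_phi_old, ← padWord3_map]
      rfl
    · exact ⟨_, ⟨y, hy, a, rfl⟩, by rw [extendStacking_phi_new _ _ _ ha]⟩

lemma respectsSubgroup_extendStacking {G : Type} [Group G] {π' : α' → G} {inv' : α' → α'}
    (hSinv : ∀ a ∈ S, inv' a ∈ S) {H : Subgroup G}
    (hH : RespectsSubgroup (fun a : {a : α' // a ∈ S} => π' a.1)
      (fun a => ⟨inv' a.1, hSinv a.1 a.2⟩) st H) :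
    RespectsSubgroup π' inv' (extendStacking st w) H := by
  obtain ⟨B, hBinv, hBH, hBcl, NH, NTr, hNHB, hNHp, hNH, hTrp, hTr, hN, hcl, htr⟩ := hH
  refine ⟨Subtype.val '' B, ?_, ?_, ?_, upWord '' NH, upWord '' NTr, ?_, hNHp.image_upWord, ?_,
    hTrp.image_upWord, ?_, ?_, ?_, ?_⟩
  · rintro _ ⟨b, hb, rfl⟩
    exact ⟨_, hBinv b hb, rfl⟩
  · rintro _ ⟨b, hb, rfl⟩
    exact hBH b hb
  · rw [Set.image_image]
    exact hBcl
  · rintro _ ⟨u, hu, rfl⟩ b hb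
    obtain ⟨c, hc, rfl⟩ := List.mem_map.1 hb
    exact ⟨c, hNHB u hu c hc, rfl⟩
  · intro h hh
    obtain ⟨u, ⟨hu, rfl⟩, huniq⟩ := hNH h hh
    refine ⟨upWord u, ⟨⟨u, hu, rfl⟩, wordVal_upWord ..⟩, ?_⟩
    rintro _ ⟨⟨z, hz, rfl⟩, hv⟩
    rw [wordVal_upWord] at hv
    rw [huniq z ⟨hz, hv⟩]
  · intro g
    obtain ⟨u, ⟨hu, hug⟩, huniq⟩ := hTr g
    refine ⟨upWord u, ⟨⟨u, hu, rfl⟩, by rwa [wordVal_upWord]⟩, ?_⟩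
    rintro _ ⟨⟨z, hz, rfl⟩, hv⟩
    rw [wordVal_upWord] at hv
    rw [huniq z ⟨hz, hv⟩]
  · ext x
    change x ∈ upWord '' st.N ↔ _
    rw [hN]
    constructor
    · rintro ⟨_, ⟨u, hu, v, hv, rfl⟩, rfl⟩
      exact ⟨_, ⟨u, hu, rfl⟩, _, ⟨v, hv, rfl⟩, List.map_append⟩
    · rintro ⟨_, ⟨u, hu, rfl⟩, _, ⟨v, hv, rfl⟩, rfl⟩
      exact ⟨_, ⟨u, hu, v, hv, rfl⟩, List.map_append⟩
  · rintro _ ⟨y, hy, rfl⟩ hyH _ ⟨b, hb, rfl⟩ c hc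
    rw [extendStacking_phi_old] at hc
    rw [wordVal_upWord] at hyH
    obtain ⟨d, hd, rfl⟩ := List.mem_map.1 hc
    exact ⟨d, hcl y hy hyH b hb d hd, rfl⟩
  · rintro a _ ⟨y, hy, rfl⟩ _ ⟨y', hy', rfl⟩ hya hh
    rw [wordVal_upWord] at hya hh
    rw [wordVal_upWord] at hh
    by_cases ha : a ∈ S
    · lift a to {a : α' // a ∈ S} using ha
      rw [extendStacking_phi_old, extendStacking_phi_old,
        htr a y hy y' hy' (fun h => hya ⟨h.1, a, h.2, rfl⟩) hh]
    · rw [extendStacking_phi_new _ _ _ ha, extendStacking_phi_new _ _ _ ha]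

end Extend

/-- **Lemma (enlarging the generating set).** If `G` is autostackable over a finite
inverse-closed generating set `A` respecting a finitely generated subgroup `H`, and
`A′ ⊇ A` is another finite inverse-closed generating set for `G` (with letter map and
involution extending those of `A`), then `G` is autostackable over `A′` respecting `H`.
Here `A` is realized as the subtype of the finset `S ⊆ A′`. -/
theorem autostackable_respecting_extend_generators
    {G : Type} [Group G] (H : Subgroup G) (hHfg : H.FG)
    (α' : Type) [Fintype α'] (π' : α' → G) (inv' : α' → α')
    (S : Finset α') (hSinv : ∀ a ∈ S, inv' a ∈ S)
    (hgen' : IsInvGenSet G π' inv')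
    (hgenS : IsInvGenSet G (fun a : {a : α' // a ∈ S} => π' a.1)
      (fun a : {a : α' // a ∈ S} => ⟨inv' a.1, hSinv a.1 a.2⟩))
    (hA : AutostackableOverRespecting (fun a : {a : α' // a ∈ S} => π' a.1)
      (fun a : {a : α' // a ∈ S} => ⟨inv' a.1, hSinv a.1 a.2⟩) H) :
    AutostackableOverRespecting π' inv' H := by
  obtain ⟨st, hst, hauto, hH⟩ := hA
  -- a new letter is rewritten to the old normal form of the element it represents
  choose w hw _ using fun a => hst.nf (π' a)
  exact ⟨extendStacking st w, isStacking_extendStacking st w hSinv hgen' hst fun a => (hw a).2,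
    isAuto_extendStacking st w hauto, respectsSubgroup_extendStacking st w hSinv hH⟩
end

section
/- Let G be a group with finite inverse-closed generating set A, let B ⊆ A be an inverse-closed subset, and let H ≤ G be the subgroup generated by π(B), with π(B) ⊆ H. Suppose N_H ⊆ B* is a set of normal forms for H, N_Tr ⊆ A* is a set containing exactly one representative of each right coset Hg of H in G, and the concatenation N := N_H · N_Tr is a set of normal forms for G. If N is regular and prefix-closed, then N_H = N ∩ B* and N_Tr = {ε} ∪ (N ∩ (A∖B)·A*), and both N_H and N_Tr are regular prefix-closed languages. -/
theorem IsRegularLang.inter {α : Type} {L₁ L₂ : Set (List α)}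
    (h₁ : IsRegularLang L₁) (h₂ : IsRegularLang L₂) : IsRegularLang (L₁ ∩ L₂) := by
  obtain ⟨σ₁, i₁, M₁, rfl⟩ := h₁
  obtain ⟨σ₂, i₂, M₂, rfl⟩ := h₂
  exact ⟨σ₁ × σ₂, inferInstance, M₁.inter M₂, M₁.accepts_inter M₂⟩

open Classical in
/-- The language `B*` is regular; the automaton's single bit records whether all letters read so
far lie in `B`. -/
theorem isRegularLang_forall_mem {α : Type} (B : Set α) :
    IsRegularLang {w : List α | ∀ b ∈ w, b ∈ B} := by
  let M : DFA α Bool := ⟨fun s a => s && decide (a ∈ B), true, {true}⟩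
  refine ⟨Bool, inferInstance, M, ?_⟩
  have key : ∀ (w : List α) (s : Bool),
      M.evalFrom s w = true ↔ s = true ∧ ∀ b ∈ w, b ∈ B := by
    intro w
    induction w with
    | nil => simp
    | cons a w ih =>
      intro s
      rw [DFA.evalFrom_cons, ih]
      simp [M, and_assoc]
  ext w
  change _ ↔ ∀ b ∈ w, b ∈ B
  exact (key w true).trans (by simp)

open Classical in
/-- The language of words that do not start with a letter of `B` is regular. State `none` means
that nothing has been read; `some t` records whether the first letter lies outside `B`. -/
theorem isRegularLang_head_notMem {α : Type} (B : Set α) :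
    IsRegularLang {w : List α | ∀ a w', w = a :: w' → a ∉ B} := by
  let M : DFA α (Option Bool) :=
    ⟨fun s a => some (s.getD (decide (a ∉ B))), none, {some false}ᶜ⟩
  refine ⟨Option Bool, inferInstance, M, ?_⟩
  have key : ∀ (w : List α) (t : Bool), M.evalFrom (some t) w = some t := by
    intro w
    induction w with
    | nil => simp
    | cons a w ih =>
      intro t
      rw [DFA.evalFrom_cons]
      exact ih t
  ext w
  change M.evalFrom none w ∈ ({some false}ᶜ : Set (Option Bool)) ↔ ∀ a w', w = a :: w' → a ∉ B
  cases w with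
  | nil => simp
  | cons a w =>
    have h : M.evalFrom none (a :: w) = some (decide (a ∉ B)) := by
      rw [DFA.evalFrom_cons]
      exact key w _
    rw [h]
    simp

theorem PrefixClosed.inter {α : Type} {L₁ L₂ : Set (List α)}
    (h₁ : PrefixClosed L₁) (h₂ : PrefixClosed L₂) : PrefixClosed (L₁ ∩ L₂) :=
  fun w hw p hp => ⟨h₁ w hw.1 p hp, h₂ w hw.2 p hp⟩

theorem wordVal_append {G : Type} [Monoid G] {α : Type} (π : α → G) (u v : List α) :
    wordVal π (u ++ v) = wordVal π u * wordVal π v := by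
  simp [wordVal]

theorem wordVal_mem {G : Type} [Group G] {α : Type} {π : α → G} {B : Set α} {H : Subgroup G}
    (hBH : ∀ b ∈ B, π b ∈ H) {w : List α} (hw : ∀ b ∈ w, b ∈ B) : wordVal π w ∈ H := by
  refine Subgroup.list_prod_mem _ fun x hx => ?_
  obtain ⟨b, hb, rfl⟩ := List.mem_map.1 hx
  exact hBH b (hw b hb)


/-- **Lemma.** Suppose the prefix-closed regular set of normal forms `N` for `G`
factors as the concatenation `N_H · N_Tr` of a set of normal forms over `B` for the
subgroup `H` and a transversal language for the right cosets of `H`.  Then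
`N_H = N ∩ B*` and `N_Tr = {ε} ∪ (N ∩ (A∖B)·A*)`, and both `N_H` and `N_Tr` are
regular and prefix-closed. -/
theorem respecting_normal_forms_decomposition
    {G : Type} [Group G] {α : Type} [Fintype α]
    (π : α → G) (inv : α → α) (hgen : IsInvGenSet G π inv)
    (B : Set α) (hBinv : ∀ b ∈ B, inv b ∈ B)
    (H : Subgroup G) (hBH : ∀ b ∈ B, π b ∈ H)
    (hHgen : Subgroup.closure (π '' B) = H)
    (NH NTr : Set (List α))
    (hNHB : ∀ w ∈ NH, ∀ b ∈ w, b ∈ B)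
    (hNHnf : ∀ h : G, h ∈ H → ∃! w, w ∈ NH ∧ wordVal π w = h)
    (hNTrtr : ∀ g : G, ∃! w, w ∈ NTr ∧ wordVal π w * g⁻¹ ∈ H)
    (N : Set (List α)) (hN : N = {w | ∃ u ∈ NH, ∃ v ∈ NTr, w = u ++ v})
    (hNnf : ∀ g : G, ∃! w, w ∈ N ∧ wordVal π w = g)
    (hNreg : IsRegularLang N) (hNpc : PrefixClosed N) :
    NH = N ∩ {w | ∀ b ∈ w, b ∈ B} ∧
    NTr = {([] : List α)} ∪ (N ∩ {w | ∃ a, ∃ w' : List α, w = a :: w' ∧ a ∉ B}) ∧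
    IsRegularLang NH ∧ PrefixClosed NH ∧ IsRegularLang NTr ∧ PrefixClosed NTr := by
  have memN : ∀ w, w ∈ N ↔ ∃ u ∈ NH, ∃ v ∈ NTr, w = u ++ v := fun w => by rw [hN]; rfl
  have nilN : ([] : List α) ∈ N := by
    obtain ⟨w, ⟨hw, -⟩, -⟩ := hNnf 1
    exact hNpc w hw [] List.nil_prefix
  obtain ⟨nilH, nilT⟩ : [] ∈ NH ∧ [] ∈ NTr := by
    obtain ⟨u, hu, v, hv, h⟩ := (memN _).1 nilN
    obtain ⟨rfl, rfl⟩ := List.append_eq_nil_iff.1 h.symm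
    exact ⟨hu, hv⟩
  have hNH : NH = N ∩ {w | ∀ b ∈ w, b ∈ B} := by
    ext w
    constructor
    · intro hw
      exact ⟨(memN w).2 ⟨w, hw, [], nilT, by simp⟩, hNHB w hw⟩
    · rintro ⟨hw, hwB⟩
      obtain ⟨u, hu, v, hv, rfl⟩ := (memN w).1 hw
      have hvH : wordVal π v ∈ H :=
        wordVal_mem hBH fun b hb => hwB b (List.mem_append_right u hb)
      have : v = [] := (hNTrtr 1).unique ⟨hv, by simpa using hvH⟩ ⟨nilT, by simp [wordVal]⟩
      simpa [this] using hu
  have hNTr : NTr = N ∩ {w | ∀ a w', w = a :: w' → a ∉ B} := by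
    ext v
    constructor
    · intro hv
      refine ⟨(memN v).2 ⟨[], nilH, v, hv, rfl⟩, ?_⟩
      rintro b v' rfl hb
      obtain ⟨u, ⟨hu, huv⟩, -⟩ := hNHnf (π b)⁻¹ (H.inv_mem (hBH b hb))
      have hub : u ++ [b] ∈ NH := by
        rw [hNH]
        refine ⟨hNpc (u ++ b :: v') ((memN _).2 ⟨u, hu, _, hv, rfl⟩) _ ⟨v', by simp⟩, ?_⟩
        intro c hc
        rcases List.mem_append.1 hc with hc | hc
        · exact hNHB u hu c hc
        · rwa [List.mem_singleton.1 hc]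
      have h1 : wordVal π (u ++ [b]) = 1 := by
        rw [wordVal_append, huv]
        simp [wordVal]
      have := (hNHnf 1 H.one_mem).unique ⟨hub, h1⟩ ⟨nilH, by simp [wordVal]⟩
      simp at this
    · rintro ⟨hw, hwB⟩
      obtain ⟨u, hu, v, hv, rfl⟩ := (memN v).1 hw
      cases u with
      | nil => exact hv
      | cons a u => exact absurd (hNHB _ hu a (by simp)) (hwB a (u ++ v) rfl)
  refine ⟨hNH, ?_, ?_, ?_, ?_, ?_⟩
  · rw [hNTr]
    ext w
    cases w with
    | nil => simp [nilN]
    | cons a w => simp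
  · rw [hNH]
    exact hNreg.inter (isRegularLang_forall_mem B)
  · rw [hNH]
    exact hNpc.inter fun w hw p hp b hb => hw b (hp.subset hb)
  · rw [hNTr]
    exact hNreg.inter (isRegularLang_head_notMem B)
  · rw [hNTr]
    refine hNpc.inter ?_
    rintro w hw p ⟨t, rfl⟩ a w' rfl
    exact hw a (w' ++ t) rfl
end
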